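/- arXiv:1008.3097 — 5 statements merged into one kernel-verified Lean document; each statement's English description precedes it below -/
import Mathlib

section
/- Let ε ∈ (0,1) and z ∈ (4π/(3−2ε), 4π]. Then 0 ≤ y(z) < z^{3/2}. Moreover, the integrand 36π − 27(1−ε) y(z)^{2/3} − 9ε x^{2/3} is strictly positive for x ∈ [0, y(z)), the integrand 36π − 18(1−ε) y(z) x^{−1/3} − 9 x^{2/3} is strictly positive for x ∈ [y(z), z^{3/2}) and vanishes at x = z^{3/2}, and γ(z) is finite; i.e. the (improper) integrals defining γ(z) converge. -/
open Real MeasureTheory Set Filter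

/-- `y(z) = z^{1/2}(4π − z)/(2(1−ε))`. -/
noncomputable def yFn (ε z : ℝ) : ℝ := z ^ (1/2 : ℝ) * (4 * π - z) / (2 * (1 - ε))

/-- The comparison function `γ` from the proof of the equality case of Bray's
volume comparison theorem. -/
noncomputable def gammaFn (ε z : ℝ) : ℝ :=
  if z ≤ 4 * π / (3 - 2 * ε) then
    ∫ x in (0:ℝ)..(z ^ (3/2 : ℝ)), (9 * ε * z - 9 * ε * x ^ (2/3 : ℝ)) ^ (-(1/2) : ℝ)
  else
    (∫ x in (0:ℝ)..(yFn ε z),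
        (36 * π - 27 * (1 - ε) * (yFn ε z) ^ (2/3 : ℝ) - 9 * ε * x ^ (2/3 : ℝ)) ^ (-(1/2) : ℝ)) +
    (∫ x in (yFn ε z)..(z ^ (3/2 : ℝ)),
        (36 * π - 18 * (1 - ε) * (yFn ε z) * x ^ (-(1/3) : ℝ) - 9 * x ^ (2/3 : ℝ)) ^ (-(1/2) : ℝ))

/-! In the variable `u = x^{1/3}` the second radicand `36π - 18(1-ε) y u⁻¹ - 9u²` is concave for
`u ≥ y^{1/3}`; it vanishes at `u = z^{1/2}` by the definition of `y`, and at `u = y^{1/3}` it takes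
the value `9(4π - (3-2ε) y^{2/3})`, which is also the minimum of the first radicand. This value is
positive: `r = (4π/(3-2ε))^{1/2} < z^{1/2}` satisfies `2(1-ε) r³ = r(4π - r²)`, whereas
`2(1-ε) y = z^{1/2}(4π - z)`, and `t ↦ t(4π - t²)` decreases for `t ≥ (4π/3)^{1/2}`, so `y < r³`.
A concave function lies above its chord, hence the second radicand is at least a multiple of
`z^{3/2} - x`, and its inverse square root is integrable. -/

/-- The radicand of the integral over `[0, y(z)]` in `γ(z)`, with `p` in place of `4π`. -/
noncomputable def innerRadicand (p ε y x : ℝ) : ℝ :=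
  9 * p - 27 * (1 - ε) * y ^ (2/3 : ℝ) - 9 * ε * x ^ (2/3 : ℝ)

/-- The radicand of the integral over `[y(z), z^{3/2}]` in `γ(z)`, with `p` in place of `4π`. -/
noncomputable def outerRadicand (p ε y x : ℝ) : ℝ :=
  9 * p - 18 * (1 - ε) * y * x ^ (-(1/3) : ℝ) - 9 * x ^ (2/3 : ℝ)

section

variable {a b c k r : ℝ} {f : ℝ → ℝ}

lemma strictAntiOn_mul_sub_sq (p : ℝ) :
    StrictAntiOn (fun t : ℝ => t * (p - t ^ 2)) (Ici √(p / 3)) := by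
  intro r hr s _ hrs
  obtain ⟨hr0, hpr⟩ := Real.sqrt_le_iff.1 (mem_Ici.1 hr)
  have hfactor : 0 < s ^ 2 + s * r + r ^ 2 - p := by nlinarith
  linear_combination mul_pos (sub_pos.2 hrs) hfactor

lemma convexOn_mul_inv (hc : 0 ≤ c) (ha : 0 < c → 0 < a) :
    ConvexOn ℝ (Ici a) fun u => c * u⁻¹ := by
  rcases hc.eq_or_lt with rfl | hc
  · simpa only [zero_mul] using convexOn_const (0 : ℝ) (convex_Ici a)
  · have hinv : ConvexOn ℝ (Ioi 0) fun u : ℝ => u⁻¹ := by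
      simpa only [zpow_neg_one] using convexOn_zpow (𝕜 := ℝ) (-1)
    exact (hinv.smul hc.le).subset (Ici_subset_Ioi.2 (ha hc)) (convex_Ici a)

lemma div_mul_sub_le_of_concaveOn (hf : ConcaveOn ℝ (Icc a b) f) (hab : a < b) (hb : f b = 0)
    {x : ℝ} (hx : x ∈ Icc a b) : f a / (b - a) * (b - x) ≤ f x := by
  have hba : 0 < b - a := sub_pos.2 hab
  have hcombo : (b - x) / (b - a) * a + (x - a) / (b - a) * b = x := by field_simp; ring
  have hchord := hf.2 (left_mem_Icc.2 hab.le) (right_mem_Icc.2 hab.le)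
    (div_nonneg (sub_nonneg.2 hx.2) hba.le) (div_nonneg (sub_nonneg.2 hx.1) hba.le)
    (by field_simp; ring)
  simp only [smul_eq_mul, hcombo, hb, mul_zero, add_zero] at hchord
  exact (div_mul_comm _ _ _).trans_le hchord

lemma pow_three_sub_pow_three_le (ha : 0 ≤ a) (hab : a ≤ b) :
    b ^ 3 - a ^ 3 ≤ 3 * b ^ 2 * (b - a) := by
  nlinarith [mul_nonneg (sub_nonneg.2 hab) (sub_nonneg.2 hab)]

lemma pow_three_rpow_two_thirds {u : ℝ} (hu : 0 ≤ u) : (u ^ 3) ^ (2/3 : ℝ) = u ^ 2 := by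
  rw [← Real.rpow_natCast_mul hu]; norm_num

lemma pow_three_rpow_neg_one_third {u : ℝ} (hu : 0 ≤ u) : (u ^ 3) ^ (-(1/3) : ℝ) = u⁻¹ := by
  rw [← Real.rpow_natCast_mul hu]; norm_num [Real.rpow_neg_one]

lemma intervalIntegrable_rpow_neg_of_mul_sub_le (hab : a ≤ b) (hk : 0 < k) (hr0 : 0 ≤ r)
    (hr1 : r < 1) (hf : AEMeasurable f (volume.restrict (Ioo a b)))
    (hle : ∀ x ∈ Ioo a b, k * (b - x) ≤ f x) :
    IntervalIntegrable (fun x => f x ^ (-r)) volume a b := by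
  have hmajorant : IntervalIntegrable (fun x => k ^ (-r) * (b - x) ^ (-r)) volume a b := by
    have hpow := (intervalIntegral.intervalIntegrable_rpow' (a := b - a) (b := 0)
      (r := -r) (by linarith)).comp_sub_left b
    simpa only [sub_sub_cancel, sub_zero] using hpow.const_mul (k ^ (-r))
  rw [intervalIntegrable_iff_integrableOn_Ioo_of_le hab] at hmajorant ⊢
  refine hmajorant.mono' (hf.pow_const (-r)).aestronglyMeasurable
    (ae_restrict_of_forall_mem measurableSet_Ioo fun x hx => ?_)
  have hbx : 0 < b - x := sub_pos.2 hx.2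
  have hpos : 0 < k * (b - x) := mul_pos hk hbx
  rw [Real.norm_of_nonneg (Real.rpow_nonneg (hpos.le.trans (hle x hx)) _),
    ← Real.mul_rpow hk.le hbx.le]
  exact Real.rpow_le_rpow_of_nonpos hpos (hle x hx) (neg_nonpos.2 hr0)

end

section Radicands

variable {p ε s y : ℝ}

lemma lt_sqrt_pow_three_of_two_mul_eq (hp : 0 ≤ p) (hε0 : 0 ≤ ε) (hε1 : ε < 1)
    (hs : √(p / (3 - 2 * ε)) < s) (hy : 2 * (1 - ε) * y = s * (p - s ^ 2)) :
    y < √(p / (3 - 2 * ε)) ^ 3 := by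
  set r := √(p / (3 - 2 * ε))
  have hden : 0 < 3 - 2 * ε := by linarith
  have hp_eq : p = (3 - 2 * ε) * r ^ 2 := by
    rw [Real.sq_sqrt (by positivity), mul_div_cancel₀ _ hden.ne']
  have hr : √(p / 3) ≤ r := Real.sqrt_le_sqrt (by gcongr; linarith)
  have hanti : s * (p - s ^ 2) < r * (p - r ^ 2) :=
    strictAntiOn_mul_sub_sq p hr (hr.trans hs.le) hs
  have hscaled : 2 * (1 - ε) * y < 2 * (1 - ε) * r ^ 3 :=
    calc 2 * (1 - ε) * y < r * (p - r ^ 2) := hy.trans_lt hanti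
      _ = 2 * (1 - ε) * r ^ 3 := by rw [hp_eq]; ring
  exact lt_of_mul_lt_mul_left hscaled (by linarith)

lemma outerRadicand_pow_three {u : ℝ} (hu : 0 ≤ u) :
    outerRadicand p ε y (u ^ 3) = 9 * p - 18 * (1 - ε) * y * u⁻¹ - 9 * u ^ 2 := by
  rw [outerRadicand, pow_three_rpow_two_thirds hu, pow_three_rpow_neg_one_third hu]

lemma outerRadicand_self (hy : 0 ≤ y) :
    outerRadicand p ε y y = 9 * (p - (3 - 2 * ε) * y ^ (2/3 : ℝ)) := by
  have hmul : y * y ^ (-(1/3) : ℝ) = y ^ (2/3 : ℝ) := by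
    rw [← Real.rpow_one_add' hy (by norm_num)]; norm_num
  rw [outerRadicand]
  linear_combination -18 * (1 - ε) * hmul

lemma innerRadicand_self (hy : 0 ≤ y) : innerRadicand p ε y y = outerRadicand p ε y y := by
  rw [outerRadicand_self hy, innerRadicand]
  ring

lemma outerRadicand_self_pos (hε : ε < 3 / 2) (hy : 0 ≤ y)
    (hlt : y < √(p / (3 - 2 * ε)) ^ 3) : 0 < outerRadicand p ε y y := by
  have hden : 0 < 3 - 2 * ε := by linarith
  have hsqrt : 0 < √(p / (3 - 2 * ε)) := (by decide : Odd 3).pow_pos_iff.1 (hy.trans_lt hlt)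
  have hpow : y ^ (2/3 : ℝ) < p / (3 - 2 * ε) :=
    calc y ^ (2/3 : ℝ) < (√(p / (3 - 2 * ε)) ^ 3) ^ (2/3 : ℝ) := by gcongr
      _ = p / (3 - 2 * ε) := by
        rw [pow_three_rpow_two_thirds hsqrt.le, Real.sq_sqrt (Real.sqrt_pos.1 hsqrt).le]
  rw [lt_div_iff₀' hden] at hpow
  rw [outerRadicand_self hy]
  linarith

lemma innerRadicand_pos (hε : 0 ≤ ε) (hy : 0 < innerRadicand p ε y y) {x : ℝ}
    (hx : x ∈ Icc 0 y) : 0 < innerRadicand p ε y x := by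
  refine hy.trans_le ?_
  unfold innerRadicand
  have hx0 := hx.1
  gcongr
  exact hx.2

lemma intervalIntegrable_innerRadicand_rpow (hε : 0 ≤ ε) (hy0 : 0 ≤ y)
    (hy : 0 < innerRadicand p ε y y) (r : ℝ) :
    IntervalIntegrable (fun x => innerRadicand p ε y x ^ r) volume 0 y := by
  have hcont : Continuous (innerRadicand p ε y) := by
    unfold innerRadicand
    exact continuous_const.sub (continuous_const.mul (Real.continuous_rpow_const (by norm_num)))
  refine (hcont.continuousOn.rpow_const fun x hx => .inl ?_).intervalIntegrable
  exact (innerRadicand_pos hε hy (uIcc_of_le hy0 ▸ hx)).ne'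

lemma outerRadicand_pow_three_eq_zero (hs : 0 < s) (hy : 2 * (1 - ε) * y = s * (p - s ^ 2)) :
    outerRadicand p ε y (s ^ 3) = 0 := by
  rw [outerRadicand_pow_three hs.le]
  field_simp
  linear_combination -9 * hy

lemma concaveOn_outerRadicand_pow_three (hε : ε ≤ 1) (hy : 0 ≤ y) :
    ConcaveOn ℝ (Ici (y ^ (1/3 : ℝ))) fun u => outerRadicand p ε y (u ^ 3) := by
  have hinv : ConvexOn ℝ (Ici (y ^ (1/3 : ℝ))) fun u => y * u⁻¹ :=
    convexOn_mul_inv hy fun hy => Real.rpow_pos_of_pos hy _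
  have hsq : ConvexOn ℝ (Ici (y ^ (1/3 : ℝ))) fun u : ℝ => u ^ 2 :=
    even_two.convexOn_pow.subset (subset_univ _) (convex_Ici _)
  have hε' : 0 ≤ 18 * (1 - ε) := by linarith
  refine (((concaveOn_const (9 * p) (convex_Ici _)).sub (hinv.smul hε')).sub
    (hsq.smul (by norm_num : (0 : ℝ) ≤ 9))).congr fun u hu => ?_
  have hu0 : 0 ≤ u := (Real.rpow_nonneg hy _).trans hu
  simp only [outerRadicand_pow_three hu0, Pi.sub_apply, smul_eq_mul, mul_assoc]

lemma exists_mul_sub_le_outerRadicand (hε : ε ≤ 1) (hy : 0 ≤ y) (hys : y < s ^ 3)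
    (hpos : 0 < outerRadicand p ε y y) (hzero : outerRadicand p ε y (s ^ 3) = 0) :
    ∃ k > 0, ∀ x ∈ Icc y (s ^ 3), k * (s ^ 3 - x) ≤ outerRadicand p ε y x := by
  have hs : 0 < s := (by decide : Odd 3).pow_pos_iff.1 (hy.trans_lt hys)
  have hcube {x : ℝ} (hx : 0 ≤ x) : (x ^ (1/3 : ℝ)) ^ 3 = x := by
    rw [← Real.rpow_mul_natCast hx]; norm_num
  set w := y ^ (1/3 : ℝ)
  have hws : w < s := lt_of_pow_lt_pow_left₀ 3 hs.le (by rwa [hcube hy])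
  set m := outerRadicand p ε y y / (s - w)
  have hm : 0 < m := div_pos hpos (sub_pos.2 hws)
  refine ⟨m / (3 * s ^ 2), by positivity, fun x hx => ?_⟩
  have hx0 : 0 ≤ x := hy.trans hx.1
  set u := x ^ (1/3 : ℝ)
  have hu0 : 0 ≤ u := Real.rpow_nonneg hx0 _
  have hus : u ≤ s := le_of_pow_le_pow_left₀ three_ne_zero hs.le (by rw [hcube hx0]; exact hx.2)
  have hwu : w ≤ u := Real.rpow_le_rpow hy hx.1 (by norm_num)
  have hchord : m * (s - u) ≤ outerRadicand p ε y (u ^ 3) := by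
    simpa only [hcube hy] using div_mul_sub_le_of_concaveOn
      ((concaveOn_outerRadicand_pow_three hε hy).subset Icc_subset_Ici_self (convex_Icc w s))
      hws hzero ⟨hwu, hus⟩
  calc m / (3 * s ^ 2) * (s ^ 3 - x) = m / (3 * s ^ 2) * (s ^ 3 - u ^ 3) := by rw [hcube hx0]
    _ ≤ m / (3 * s ^ 2) * (3 * s ^ 2 * (s - u)) := by
      gcongr
      exact pow_three_sub_pow_three_le hu0 hus
    _ = m * (s - u) := by field_simp
    _ ≤ outerRadicand p ε y x := by rwa [hcube hx0] at hchord

lemma measurable_outerRadicand : Measurable (outerRadicand p ε y) := by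
  unfold outerRadicand
  fun_prop

end Radicands

section yFn

variable {ε z : ℝ}

lemma yFn_nonneg (hε : ε ≤ 1) (hz0 : 0 ≤ z) (hz : z ≤ 4 * π) : 0 ≤ yFn ε z :=
  div_nonneg (mul_nonneg (Real.rpow_nonneg hz0 _) (sub_nonneg.2 hz)) (by linarith)

lemma two_mul_one_sub_mul_yFn (hε : ε ≠ 1) (hz : 0 ≤ z) :
    2 * (1 - ε) * yFn ε z = √z * (4 * π - √z ^ 2) := by
  have hε' : 1 - ε ≠ 0 := sub_ne_zero.2 hε.symm
  rw [yFn, Real.sq_sqrt hz, ← Real.sqrt_eq_rpow]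
  field_simp

end yFn

/-- For `ε ∈ (0,1)` and `z ∈ (4π/(3−2ε), 4π]`: `0 ≤ y(z) < z^{3/2}`, the first integrand is
positive on `[0, y(z))`, the second integrand is positive on `[y(z), z^{3/2})` and vanishes at
`x = z^{3/2}`, and both (improper) integrals defining `γ(z)` converge. -/
theorem stmt_2 (ε z : ℝ) (hε : ε ∈ Set.Ioo (0:ℝ) 1)
    (hz : z ∈ Set.Ioc (4 * π / (3 - 2 * ε)) (4 * π)) :
    0 ≤ yFn ε z ∧ yFn ε z < z ^ (3/2 : ℝ) ∧
    (∀ x ∈ Set.Ico (0:ℝ) (yFn ε z),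
      0 < 36 * π - 27 * (1 - ε) * (yFn ε z) ^ (2/3 : ℝ) - 9 * ε * x ^ (2/3 : ℝ)) ∧
    (∀ x ∈ Set.Ico (yFn ε z) (z ^ (3/2 : ℝ)),
      0 < 36 * π - 18 * (1 - ε) * (yFn ε z) * x ^ (-(1/3) : ℝ) - 9 * x ^ (2/3 : ℝ)) ∧
    36 * π - 18 * (1 - ε) * (yFn ε z) * (z ^ (3/2 : ℝ)) ^ (-(1/3) : ℝ)
      - 9 * (z ^ (3/2 : ℝ)) ^ (2/3 : ℝ) = 0 ∧
    IntervalIntegrable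
      (fun x => (36 * π - 27 * (1 - ε) * (yFn ε z) ^ (2/3 : ℝ)
        - 9 * ε * x ^ (2/3 : ℝ)) ^ (-(1/2) : ℝ)) volume 0 (yFn ε z) ∧
    IntervalIntegrable
      (fun x => (36 * π - 18 * (1 - ε) * (yFn ε z) * x ^ (-(1/3) : ℝ)
        - 9 * x ^ (2/3 : ℝ)) ^ (-(1/2) : ℝ)) volume (yFn ε z) (z ^ (3/2 : ℝ)) := by
  obtain ⟨hε0, hε1⟩ := hε
  obtain ⟨hz1, hz2⟩ := hz
  have hden : 0 < 3 - 2 * ε := by linarith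
  have hz0 : 0 < z := (by positivity : 0 < 4 * π / (3 - 2 * ε)).trans hz1
  have hs : √(4 * π / (3 - 2 * ε)) < √z := Real.sqrt_lt_sqrt (by positivity) hz1
  have hs0 : 0 < √z := Real.sqrt_pos.2 hz0
  have hy0 := yFn_nonneg hε1.le hz0.le hz2
  have hy := two_mul_one_sub_mul_yFn hε1.ne hz0.le
  have hyr := lt_sqrt_pow_three_of_two_mul_eq (by positivity) hε0.le hε1 hs hy
  have hys : yFn ε z < √z ^ 3 := hyr.trans (by gcongr)
  have hpos := outerRadicand_self_pos (by linarith) hy0 hyr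
  have hpos' := (innerRadicand_self hy0).trans_gt hpos
  have hzero := outerRadicand_pow_three_eq_zero hs0 hy
  obtain ⟨k, hk, hle⟩ := exists_mul_sub_le_outerRadicand hε1.le hy0 hys hpos hzero
  have hz32 : z ^ (3/2 : ℝ) = √z ^ 3 := by
    rw [Real.rpow_div_two_eq_sqrt 3 hz0.le]; norm_cast
  rw [hz32, show 36 * π = 9 * (4 * π) by ring]
  exact ⟨hy0, hys, fun x hx => innerRadicand_pos hε0.le hpos' (Ico_subset_Icc_self hx),
    fun x hx => (mul_pos hk (sub_pos.2 hx.2)).trans_le (hle x (Ico_subset_Icc_self hx)), hzero,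
    intervalIntegrable_innerRadicand_rpow hε0.le hy0 hpos' _,
    intervalIntegrable_rpow_neg_of_mul_sub_le hys.le hk (by norm_num) (by norm_num)
      measurable_outerRadicand.aemeasurable fun x hx => hle x (Ioo_subset_Icc_self hx)⟩
end

section
/- Suppose ε ∈ (0,1) satisfies condition (★). Then γ(z) < π² for all z ∈ (0, 4π). -/
open Real MeasureTheory Set Filter

/-- Condition (★): for all `(y,z) ∈ ℝ × [4π/(3−2ε), 4π)` with `2(1−ε)y = z^{1/2}(4π − z)`,
the sum of the two comparison integrals is `< π²`. -/
def CondStar (ε : ℝ) : Prop :=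
  ∀ y z : ℝ, z ∈ Set.Ico (4 * π / (3 - 2 * ε)) (4 * π) →
    2 * (1 - ε) * y = z ^ (1/2 : ℝ) * (4 * π - z) →
    (∫ x in (0:ℝ)..y,
        (36 * π - 27 * (1 - ε) * y ^ (2/3 : ℝ) - 9 * ε * x ^ (2/3 : ℝ)) ^ (-(1/2) : ℝ)) +
    (∫ x in y..(z ^ (3/2 : ℝ)),
        (36 * π - 18 * (1 - ε) * y * x ^ (-(1/3) : ℝ) - 9 * x ^ (2/3 : ℝ)) ^ (-(1/2) : ℝ))
      < π ^ 2

/-!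
By scaling, the formula for `γ` on `(0, 4π/(3 - 2ε)]` is a nonnegative multiple of `z`, hence
largest at the right endpoint `w`. There `y(w) = w ^ (3/2)`, so the second integral in (★) is over a
point, while `36π - 27(1 - ε)w = 9εw` turns the first into `γ(w)`; thus (★) at `w` bounds `γ` on the
whole interval. Beyond `w`, `γ` is the quantity bounded by (★).
-/

/-- The integral `∫₀^{z^p} (c z - c x^{1/p})^s dx`, homogeneous of degree `p + s` in `z`. For
`c = 9ε`, `p = 3/2`, `s = -1/2` it is `γ(z)` on `(0, 4π/(3 - 2ε)]`. -/
noncomputable def homogeneousIntegral (c p s z : ℝ) : ℝ :=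
  ∫ x in (0 : ℝ)..z ^ p, (c * z - c * x ^ p⁻¹) ^ s

/-- The sum of the two integrals in condition (★), with `y` and `z` independent of each other. -/
noncomputable def comparisonSum (ε y z : ℝ) : ℝ :=
  (∫ x in (0 : ℝ)..y,
      (36 * π - 27 * (1 - ε) * y ^ (2/3 : ℝ) - 9 * ε * x ^ (2/3 : ℝ)) ^ (-(1/2) : ℝ)) +
  ∫ x in y..z ^ (3/2 : ℝ),
      (36 * π - 18 * (1 - ε) * y * x ^ (-(1/3) : ℝ) - 9 * x ^ (2/3 : ℝ)) ^ (-(1/2) : ℝ)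

section Homogeneous

variable {c p : ℝ}

lemma sub_mul_rpow_inv_nonneg (hc : 0 ≤ c) (hp : 0 ≤ p) {u : ℝ} (hu : u ∈ Icc 0 1) :
    0 ≤ c - c * u ^ p⁻¹ :=
  sub_nonneg.2 <| mul_le_of_le_one_right hc <| rpow_le_one hu.1 hu.2 (inv_nonneg.2 hp)

lemma homogeneousIntegral_one_nonneg (hc : 0 ≤ c) (hp : 0 ≤ p) (s : ℝ) :
    0 ≤ homogeneousIntegral c p s 1 := by
  rw [homogeneousIntegral, one_rpow, mul_one]
  exact intervalIntegral.integral_nonneg zero_le_one fun u hu ↦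
    rpow_nonneg (sub_mul_rpow_inv_nonneg hc hp hu) s

lemma homogeneousIntegral_eq_rpow_mul (hc : 0 ≤ c) (hp : 0 < p) (s : ℝ) {z : ℝ} (hz : 0 < z) :
    homogeneousIntegral c p s z = z ^ (p + s) * homogeneousIntegral c p s 1 := by
  have integrand_scale : ∀ u ∈ uIcc (0 : ℝ) 1,
      (c * z - c * (z ^ p * u) ^ p⁻¹) ^ s = z ^ s * (c - c * u ^ p⁻¹) ^ s := by
    intro u hu
    rw [uIcc_of_le zero_le_one] at hu
    rw [mul_rpow (rpow_nonneg hz.le p) hu.1, rpow_rpow_inv hz.le hp.ne',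
      ← mul_rpow hz.le (sub_mul_rpow_inv_nonneg hc hp.le hu)]
    ring_nf
  calc homogeneousIntegral c p s z
      = z ^ p * ∫ u in (0 : ℝ)..1, (c * z - c * (z ^ p * u) ^ p⁻¹) ^ s := by
        simpa [homogeneousIntegral] using (intervalIntegral.mul_integral_comp_mul_left
          (a := 0) (b := 1) (f := fun x : ℝ ↦ (c * z - c * x ^ p⁻¹) ^ s) (z ^ p)).symm
    _ = z ^ p * (z ^ s * ∫ u in (0 : ℝ)..1, (c - c * u ^ p⁻¹) ^ s) := by
        rw [intervalIntegral.integral_congr integrand_scale, intervalIntegral.integral_const_mul]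
    _ = z ^ (p + s) * homogeneousIntegral c p s 1 := by
        rw [homogeneousIntegral, one_rpow, mul_one, rpow_add hz, mul_assoc]

lemma monotoneOn_homogeneousIntegral (hc : 0 ≤ c) (hp : 0 < p) {s : ℝ} (hps : 0 ≤ p + s) :
    MonotoneOn (homogeneousIntegral c p s) (Ioi 0) := by
  intro z (hz : 0 < z) w (hw : 0 < w) hzw
  rw [homogeneousIntegral_eq_rpow_mul hc hp s hz, homogeneousIntegral_eq_rpow_mul hc hp s hw]
  exact mul_le_mul_of_nonneg_right (rpow_le_rpow hz.le hzw hps)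
    (homogeneousIntegral_one_nonneg hc hp.le s)

end Homogeneous

section Comparison

variable {ε z : ℝ}

lemma gammaFn_of_le (hz : z ≤ 4 * π / (3 - 2 * ε)) :
    gammaFn ε z = homogeneousIntegral (9 * ε) (3/2) (-(1/2)) z := by
  rw [gammaFn, if_pos hz, homogeneousIntegral, inv_div]

lemma gammaFn_of_lt (hz : 4 * π / (3 - 2 * ε) < z) :
    gammaFn ε z = comparisonSum ε (yFn ε z) z :=
  if_neg hz.not_ge

lemma CondStar.comparisonSum_yFn_lt (hstar : CondStar ε) (hε : ε ≠ 1)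
    (hz : z ∈ Ico (4 * π / (3 - 2 * ε)) (4 * π)) :
    comparisonSum ε (yFn ε z) z < π ^ 2 :=
  hstar _ z hz <| mul_div_cancel₀ _ (mul_ne_zero two_ne_zero (sub_ne_zero.2 hε.symm))

lemma yFn_eq_rpow (hε : ε ≠ 1) (hz : 0 < z) (hzε : (3 - 2 * ε) * z = 4 * π) :
    yFn ε z = z ^ (3/2 : ℝ) := by
  have hε' : 2 * (1 - ε) ≠ 0 := mul_ne_zero two_ne_zero (sub_ne_zero.2 hε.symm)
  have rpow_split : z ^ (3/2 : ℝ) = z ^ (1/2 : ℝ) * z := by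
    rw [← rpow_add_one hz.ne']
    norm_num
  rw [yFn, rpow_split, ← hzε, div_eq_iff hε']
  ring

lemma comparisonSum_rpow_eq_homogeneousIntegral (hz : 0 ≤ z) (hzε : (3 - 2 * ε) * z = 4 * π) :
    comparisonSum ε (z ^ (3/2 : ℝ)) z = homogeneousIntegral (9 * ε) (3/2) (-(1/2)) z := by
  have rpow_cancel : (z ^ (3/2 : ℝ)) ^ (2/3 : ℝ) = z := by
    rw [← inv_div, rpow_inv_rpow hz (by norm_num)]
  have const_eq : 36 * π - 27 * (1 - ε) * z = 9 * ε * z := by linarith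
  rw [comparisonSum, intervalIntegral.integral_same, add_zero, rpow_cancel, const_eq,
    homogeneousIntegral, inv_div]

end Comparison

/-- If `ε ∈ (0,1)` satisfies condition (★), then `γ(z) < π²` for all `z ∈ (0, 4π)`. -/
theorem stmt_4 (ε : ℝ) (hε : ε ∈ Set.Ioo (0:ℝ) 1) (hstar : CondStar ε) :
    ∀ z ∈ Set.Ioo (0:ℝ) (4 * π), gammaFn ε z < π ^ 2 := by
  intro z hz
  have hε1 : ε ≠ 1 := hε.2.ne
  rcases le_or_gt z (4 * π / (3 - 2 * ε)) with hle | hlt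
  · set w := 4 * π / (3 - 2 * ε) with hw
    have hden : 1 < 3 - 2 * ε := by linarith [hε.2]
    have hw_pos : 0 < w := hz.1.trans_le hle
    have hw_lt : w < 4 * π := div_lt_self (by positivity) hden
    have hw_mul : (3 - 2 * ε) * w = 4 * π := mul_div_cancel₀ _ (by linarith)
    calc gammaFn ε z
        = homogeneousIntegral (9 * ε) (3/2) (-(1/2)) z := gammaFn_of_le hle
      _ ≤ homogeneousIntegral (9 * ε) (3/2) (-(1/2)) w :=
          monotoneOn_homogeneousIntegral (by linarith [hε.1]) (by norm_num) (by norm_num)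
            hz.1 hw_pos hle
      _ = comparisonSum ε (yFn ε w) w := by
          rw [yFn_eq_rpow hε1 hw_pos hw_mul,
            comparisonSum_rpow_eq_homogeneousIntegral hw_pos.le hw_mul]
      _ < π ^ 2 := hstar.comparisonSum_yFn_lt hε1 ⟨hw.ge, hw_lt⟩
  · rw [gammaFn_of_lt hlt]
    exact hstar.comparisonSum_yFn_lt hε1 ⟨hlt.le, hz.2⟩
end

section
/- Let ε ∈ (0,1) and z ∈ (0, 4π/(3−2ε)]. Then there exists a smooth function h : (0, γ(z)) → (0, z^{3/2}) such that lim_{s→0⁺} h(s) = z^{3/2}, lim_{s→γ(z)⁻} h(s) = 0, h'(s) = −(9εz − 9ε h(s)^{2/3})^{1/2} for all s ∈ (0, γ(z)), and lim_{s→0⁺} h'(s) = 0. -/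
open Real MeasureTheory Set Filter

/-- The comparison function `γ` for `z ∈ (0, 4π/(3−2ε)]`. -/
noncomputable def gammaLow (ε z : ℝ) : ℝ :=
  ∫ x in (0:ℝ)..(z ^ (3/2 : ℝ)), (9 * ε * z - 9 * ε * x ^ (2/3 : ℝ)) ^ (-(1/2) : ℝ)

/-! The autonomous equation `h' = -f(h)` with `f > 0` is solved by separating variables: the time
`∫ x in y..b, (f x)⁻¹` needed to descend from `b` to `y` is a continuous, strictly decreasing
function of `y`, and its inverse is the solution starting at `b`. The argument only asks that `f⁻¹`
be integrable, so `f` may vanish at the top endpoint `b`. Here `f x = √(9εz - 9εx^{2/3})` does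
vanish at `b = z^{3/2}`, where it is not Lipschitz and the constant `b` is a second solution; the
tangent line of `x^{2/3}` at `b` bounds `f²` below by a multiple of `b - x`, which makes `f⁻¹`
integrable, with total descent time `γ(z)`. -/

open Topology

theorem continuousOn_image_of_leftInvOn {X Y : Type*} [TopologicalSpace X] [TopologicalSpace Y]
    [T2Space Y] {f : X → Y} {g : Y → X} {K : Set X} (hK : IsCompact K) (hf : ContinuousOn f K)
    (hg : LeftInvOn g f K) : ContinuousOn g (f '' K) := by
  refine continuousOn_iff_isClosed.2 fun C hC => ⟨f '' (C ∩ K), ?_, ?_⟩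
  · exact ((hK.inter_left hC).image_of_continuousOn (hf.mono inter_subset_right)).isClosed
  · rw [hg.image_inter', inter_assoc, inter_self]

section DescentTime

/-- The time that a solution of `h' = -f(h)` takes to descend from `b` to `y`. -/
noncomputable def descentTime (f : ℝ → ℝ) (b y : ℝ) : ℝ := ∫ x in y..b, (f x)⁻¹

variable {f : ℝ → ℝ} {a b : ℝ}

theorem continuousOn_descentTime (hab : a ≤ b)
    (hint : IntervalIntegrable (fun x => (f x)⁻¹) volume a b) :
    ContinuousOn (descentTime f b) (Icc a b) := by
  rw [intervalIntegrable_iff'] at hint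
  have hprim := intervalIntegral.continuousOn_primitive_interval_left hint
  rwa [uIcc_of_le hab] at hprim

theorem hasDerivAt_descentTime (hf : ContinuousOn f (Ioo a b)) (hpos : ∀ x ∈ Ioo a b, 0 < f x)
    (hint : IntervalIntegrable (fun x => (f x)⁻¹) volume a b) {y : ℝ} (hy : y ∈ Ioo a b) :
    HasDerivAt (descentTime f b) (-(f y)⁻¹) y := by
  have hinv : ContinuousOn (fun x => (f x)⁻¹) (Ioo a b) := hf.inv₀ fun x hx => (hpos x hx).ne'
  have hint_y : IntervalIntegrable (fun x => (f x)⁻¹) volume y b :=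
    hint.mono_set (uIcc_subset_uIcc_right (Icc_subset_uIcc (Ioo_subset_Icc_self hy)))
  exact intervalIntegral.integral_hasDerivAt_left hint_y
    (hinv.stronglyMeasurableAtFilter isOpen_Ioo y hy) (hinv.continuousAt (Ioo_mem_nhds hy.1 hy.2))

theorem strictAntiOn_descentTime (hab : a ≤ b) (hf : ContinuousOn f (Ioo a b))
    (hpos : ∀ x ∈ Ioo a b, 0 < f x) (hint : IntervalIntegrable (fun x => (f x)⁻¹) volume a b) :
    StrictAntiOn (descentTime f b) (Icc a b) := by
  refine strictAntiOn_of_deriv_neg (convex_Icc a b) (continuousOn_descentTime hab hint)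
    fun y hy => ?_
  rw [interior_Icc] at hy
  rw [(hasDerivAt_descentTime hf hpos hint hy).deriv]
  exact neg_neg_of_pos (inv_pos.2 (hpos y hy))

theorem exists_hasDerivAt_neg_comp_of_intervalIntegrable_inv (hab : a ≤ b)
    (hf : ContinuousOn f (Ioo a b)) (hpos : ∀ x ∈ Ioo a b, 0 < f x)
    (hint : IntervalIntegrable (fun x => (f x)⁻¹) volume a b) :
    ∃ h : ℝ → ℝ, h 0 = b ∧ h (descentTime f b a) = a ∧
      ContinuousOn h (Icc 0 (descentTime f b a)) ∧
      MapsTo h (Ioo 0 (descentTime f b a)) (Ioo a b) ∧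
      ∀ s ∈ Ioo 0 (descentTime f b a), HasDerivAt h (-f (h s)) s := by
  have hcont := continuousOn_descentTime hab hint
  have hanti := strictAntiOn_descentTime hab hf hpos hint
  have hb : descentTime f b b = 0 := intervalIntegral.integral_same
  have himage : descentTime f b '' Icc a b = Icc 0 (descentTime f b a) := by
    rw [hcont.image_Icc_of_antitoneOn hab hanti.antitoneOn, hb]
  have himage_Ioo : descentTime f b '' Ioo a b = Ioo 0 (descentTime f b a) := by
    rw [hcont.image_Ioo_of_strictAntiOn hab hanti, hb]
  set h := Function.invFunOn (descentTime f b) (Icc a b)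
  have hleft : LeftInvOn h (descentTime f b) (Icc a b) := hanti.injOn.leftInvOn_invFunOn
  have hh_cont : ContinuousOn h (Icc 0 (descentTime f b a)) :=
    himage ▸ continuousOn_image_of_leftInvOn isCompact_Icc hcont hleft
  have hh_maps : MapsTo h (Ioo 0 (descentTime f b a)) (Ioo a b) :=
    himage_Ioo ▸ mapsTo_iff_image_subset.2 (hleft.image_image' Ioo_subset_Icc_self).subset
  have hright : RightInvOn h (descentTime f b) (Icc 0 (descentTime f b a)) :=
    himage ▸ hleft.rightInvOn_image
  refine ⟨h, hb ▸ hleft (right_mem_Icc.2 hab), hleft (left_mem_Icc.2 hab), hh_cont, hh_maps,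
    fun s hs => ?_⟩
  have hs_nhds : Icc 0 (descentTime f b a) ∈ 𝓝 s := Icc_mem_nhds hs.1 hs.2
  have hderiv := HasDerivAt.of_local_left_inverse (hh_cont.continuousAt hs_nhds)
    (hasDerivAt_descentTime hf hpos hint (hh_maps hs))
    (neg_ne_zero.2 (inv_ne_zero (hpos _ (hh_maps hs)).ne')) (mem_of_superset hs_nhds hright)
  rwa [inv_neg, inv_inv] at hderiv

end DescentTime

theorem contDiffOn_of_hasDerivAt_comp {E : Type*} [NormedAddCommGroup E] [NormedSpace ℝ E]
    [CompleteSpace E] {n : ℕ∞} {v : E → E} {u : Set E} {α : ℝ → E} {I : Set ℝ}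
    (hv : ContDiffOn ℝ n v u) (hI : IsOpen I) (hα : ∀ t ∈ I, HasDerivAt α (v (α t)) t)
    (hmem : MapsTo α I u) : ContDiffOn ℝ n α I := by
  intro t ht
  obtain ⟨c, d, -, hnhds, hsub⟩ := exists_Icc_mem_subset_of_mem_nhds (hI.mem_nhds ht)
  have hcd : ContDiffOn ℝ n α (Icc c d) :=
    ODE.contDiffOn_enat_Icc_of_hasDerivWithinAt (f := fun _ => v)
      (hv.comp contDiffOn_snd fun _ hp => hp.2)
      (fun s hs => (hα s (hsub hs)).hasDerivWithinAt) (hmem.mono_left hsub)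
  exact (hcd.contDiffAt hnhds).contDiffWithinAt

theorem intervalIntegrable_inv_sqrt_of_mul_sub_le {g : ℝ → ℝ} {a b c : ℝ} (hab : a ≤ b)
    (hc : 0 < c) (hg : AEStronglyMeasurable g (volume.restrict (Ioo a b)))
    (hle : ∀ x ∈ Ioo a b, c * (b - x) ≤ g x) :
    IntervalIntegrable (fun x => (√(g x))⁻¹) volume a b := by
  have hdom : IntervalIntegrable (fun x => (√c)⁻¹ * (b - x) ^ (-(1 / 2) : ℝ)) volume a b := by
    have hrpow : IntervalIntegrable (fun x : ℝ => x ^ (-(1 / 2) : ℝ)) volume (b - a) (b - b) :=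
      intervalIntegral.intervalIntegrable_rpow' (by norm_num)
    simpa only [sub_sub_cancel] using (hrpow.comp_sub_left b).const_mul (√c)⁻¹
  rw [intervalIntegrable_iff_integrableOn_Ioo_of_le hab] at hdom ⊢
  refine hdom.mono' (continuous_sqrt.measurable.inv.comp_aemeasurable
    hg.aemeasurable).aestronglyMeasurable ((ae_restrict_iff' measurableSet_Ioo).2 (.of_forall ?_))
  intro x hx
  have hbx : 0 < b - x := sub_pos.2 hx.2
  calc ‖(√(g x))⁻¹‖ = (√(g x))⁻¹ := norm_of_nonneg (by positivity)
    _ ≤ (√(c * (b - x)))⁻¹ := by gcongr; exact hle x hx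
    _ = (√c)⁻¹ * (b - x) ^ (-(1 / 2) : ℝ) := by
      rw [sqrt_mul hc.le, mul_inv, rpow_neg hbx.le, sqrt_eq_rpow (b - x)]

theorem mul_sub_le_rpow_sub_rpow {p x y : ℝ} (hp₀ : 0 ≤ p) (hp₁ : p ≤ 1) (hx : 0 ≤ x)
    (hy : 0 < y) : p * y ^ (p - 1) * (y - x) ≤ y ^ p - x ^ p := by
  have hbernoulli : (x / y) ^ p ≤ 1 + p * (x / y - 1) := by
    simpa only [add_sub_cancel] using
      rpow_one_add_le_one_add_mul_self (s := x / y - 1) (by linarith [div_nonneg hx hy.le]) hp₀ hp₁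
  calc p * y ^ (p - 1) * (y - x) = y ^ p - y ^ p * (1 + p * (x / y - 1)) := by
        rw [rpow_sub_one hy.ne']; field_simp; ring
    _ ≤ y ^ p - y ^ p * (x / y) ^ p := by gcongr
    _ = y ^ p - x ^ p := by rw [div_rpow hx hy.le, mul_div_cancel₀ _ (rpow_pos_of_pos hy p).ne']

section GammaSpeed

/-- The speed `√(9εz - 9εx^{2/3})` at which the solution `h` descends through the height `x`. -/
noncomputable def gammaSpeed (ε z x : ℝ) : ℝ := √(9 * ε * z - 9 * ε * x ^ (2 / 3 : ℝ))

variable {ε z : ℝ}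

theorem continuous_gammaSpeed : Continuous (gammaSpeed ε z) :=
  (continuous_const.sub (continuous_const.mul (continuous_rpow_const (by norm_num)))).sqrt

theorem rpow_three_halves_rpow_two_thirds (hz : 0 ≤ z) : (z ^ (3 / 2 : ℝ)) ^ (2 / 3 : ℝ) = z := by
  rw [← rpow_mul hz]; norm_num

theorem gammaSpeed_rpow_three_halves (hz : 0 ≤ z) : gammaSpeed ε z (z ^ (3 / 2 : ℝ)) = 0 := by
  rw [gammaSpeed, rpow_three_halves_rpow_two_thirds hz, sub_self, sqrt_zero]

theorem gammaSpeed_radicand_pos {x : ℝ} (hε : 0 < ε) (hz : 0 ≤ z)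
    (hx : x ∈ Ico 0 (z ^ (3 / 2 : ℝ))) : 0 < 9 * ε * z - 9 * ε * x ^ (2 / 3 : ℝ) := by
  have hxz : x ^ (2 / 3 : ℝ) < z :=
    (rpow_lt_rpow hx.1 hx.2 (by norm_num)).trans_eq (rpow_three_halves_rpow_two_thirds hz)
  exact sub_pos.2 (by gcongr)

theorem gammaSpeed_pos {x : ℝ} (hε : 0 < ε) (hz : 0 ≤ z) (hx : x ∈ Ico 0 (z ^ (3 / 2 : ℝ))) :
    0 < gammaSpeed ε z x :=
  sqrt_pos.2 (gammaSpeed_radicand_pos hε hz hx)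

theorem contDiffOn_gammaSpeed {n : WithTop ℕ∞} (hε : 0 < ε) (hz : 0 ≤ z) :
    ContDiffOn ℝ n (gammaSpeed ε z) (Ioo 0 (z ^ (3 / 2 : ℝ))) :=
  (contDiffOn_const.sub (contDiffOn_const.mul
    (contDiffOn_id.rpow_const_of_ne fun _ hx => hx.1.ne'))).sqrt
      fun _ hx => (gammaSpeed_radicand_pos hε hz (Ioo_subset_Ico_self hx)).ne'

theorem gammaLow_eq_descentTime (hε : 0 < ε) (hz : 0 ≤ z) :
    gammaLow ε z = descentTime (gammaSpeed ε z) (z ^ (3 / 2 : ℝ)) 0 := by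
  refine intervalIntegral.integral_congr_Ioo_of_le (rpow_nonneg hz _) fun x hx => ?_
  have hpos := gammaSpeed_radicand_pos hε hz (Ioo_subset_Ico_self hx)
  simp only [gammaSpeed, rpow_neg hpos.le, sqrt_eq_rpow]

theorem gammaLow_nonneg (hε : 0 < ε) (hz : 0 ≤ z) : 0 ≤ gammaLow ε z := by
  rw [gammaLow_eq_descentTime hε hz]
  exact intervalIntegral.integral_nonneg (rpow_nonneg hz _) fun _ _ => inv_nonneg.2 (sqrt_nonneg _)

theorem intervalIntegrable_inv_gammaSpeed (hε : 0 < ε) (hz : 0 < z) :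
    IntervalIntegrable (fun x => (gammaSpeed ε z x)⁻¹) volume 0 (z ^ (3 / 2 : ℝ)) := by
  have hR : 0 < z ^ (3 / 2 : ℝ) := rpow_pos_of_pos hz _
  refine intervalIntegrable_inv_sqrt_of_mul_sub_le hR.le
    (c := 9 * ε * (2 / 3 * (z ^ (3 / 2 : ℝ)) ^ (2 / 3 - 1 : ℝ))) (by positivity)
    (by fun_prop) fun x hx => ?_
  have htangent := mul_sub_le_rpow_sub_rpow (p := 2 / 3) (by norm_num) (by norm_num) hx.1.le hR
  rw [rpow_three_halves_rpow_two_thirds hz.le] at htangent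
  rw [← mul_sub, mul_assoc (9 * ε)]
  gcongr

end GammaSpeed

theorem stmt_6_general {ε z : ℝ} (hε : 0 < ε) (hz : 0 < z) :
    ∃ h : ℝ → ℝ,
      (∀ s ∈ Ioo 0 (gammaLow ε z), h s ∈ Ioo 0 (z ^ (3 / 2 : ℝ))) ∧
      ContDiffOn ℝ (⊤ : ℕ∞) h (Ioo 0 (gammaLow ε z)) ∧
      (∀ s ∈ Ioo 0 (gammaLow ε z),
        HasDerivAt h (-√(9 * ε * z - 9 * ε * h s ^ (2 / 3 : ℝ))) s) ∧
      Tendsto h (𝓝[Ioo 0 (gammaLow ε z)] 0) (𝓝 (z ^ (3 / 2 : ℝ))) ∧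
      Tendsto h (𝓝[Ioo 0 (gammaLow ε z)] gammaLow ε z) (𝓝 0) ∧
      Tendsto (deriv h) (𝓝[Ioo 0 (gammaLow ε z)] 0) (𝓝 0) := by
  have hR : 0 < z ^ (3 / 2 : ℝ) := rpow_pos_of_pos hz _
  obtain ⟨h, h_zero, h_end, h_cont, h_maps, h_deriv⟩ :=
    exists_hasDerivAt_neg_comp_of_intervalIntegrable_inv hR.le continuous_gammaSpeed.continuousOn
      (fun x hx => gammaSpeed_pos hε hz.le (Ioo_subset_Ico_self hx))
      (intervalIntegrable_inv_gammaSpeed hε hz)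
  rw [← gammaLow_eq_descentTime hε hz.le] at h_end h_cont h_maps h_deriv
  set T := gammaLow ε z
  have hT : 0 ≤ T := gammaLow_nonneg hε hz.le
  have tendsto_top : Tendsto h (𝓝[Ioo 0 T] 0) (𝓝 (z ^ (3 / 2 : ℝ))) :=
    h_zero ▸ (h_cont 0 (left_mem_Icc.2 hT)).mono Ioo_subset_Icc_self
  have tendsto_bot : Tendsto h (𝓝[Ioo 0 T] T) (𝓝 0) := by
    simpa only [ContinuousWithinAt, h_end] using
      (h_cont T (right_mem_Icc.2 hT)).mono Ioo_subset_Icc_self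
  have tendsto_deriv : Tendsto (fun s => -gammaSpeed ε z (h s)) (𝓝[Ioo 0 T] 0) (𝓝 0) :=
    (continuous_gammaSpeed.neg.tendsto' _ _
      (neg_eq_zero.2 (gammaSpeed_rpow_three_halves hz.le))).comp tendsto_top
  exact ⟨h, h_maps, contDiffOn_of_hasDerivAt_comp (contDiffOn_gammaSpeed hε hz.le).neg isOpen_Ioo
    h_deriv h_maps, h_deriv, tendsto_top, tendsto_bot,
    tendsto_deriv.congr' (eventually_mem_nhdsWithin.mono fun s hs => (h_deriv s hs).deriv.symm)⟩

/-- For `ε ∈ (0,1)` and `z ∈ (0, 4π/(3−2ε)]`, there is a smooth function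
`h : (0, γ(z)) → (0, z^{3/2})` with `h → z^{3/2}` at `0`, `h → 0` at `γ(z)`,
`h'(s) = −(9εz − 9ε h(s)^{2/3})^{1/2}` on `(0, γ(z))`, and `h' → 0` at `0`. -/
theorem stmt_6 (ε z : ℝ) (hε : ε ∈ Set.Ioo (0:ℝ) 1)
    (hz : z ∈ Set.Ioc (0:ℝ) (4 * π / (3 - 2 * ε))) :
    ∃ h : ℝ → ℝ,
      (∀ s ∈ Set.Ioo (0:ℝ) (gammaLow ε z), h s ∈ Set.Ioo (0:ℝ) (z ^ (3/2 : ℝ))) ∧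
      ContDiffOn ℝ (⊤ : ℕ∞) h (Set.Ioo (0:ℝ) (gammaLow ε z)) ∧
      (∀ s ∈ Set.Ioo (0:ℝ) (gammaLow ε z),
        HasDerivAt h (-Real.sqrt (9 * ε * z - 9 * ε * (h s) ^ (2/3 : ℝ))) s) ∧
      Filter.Tendsto h (nhdsWithin 0 (Set.Ioo (0:ℝ) (gammaLow ε z)))
        (nhds (z ^ (3/2 : ℝ))) ∧
      Filter.Tendsto h (nhdsWithin (gammaLow ε z) (Set.Ioo (0:ℝ) (gammaLow ε z)))
        (nhds 0) ∧
      Filter.Tendsto (deriv h) (nhdsWithin 0 (Set.Ioo (0:ℝ) (gammaLow ε z))) (nhds 0) :=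
  stmt_6_general hε.1 hz.1
end

section
/- Let ε ∈ (0,1), let z ∈ (0, 4π/(3−2ε)], let h ∈ (0, z^{3/2}], and let p ∈ ℝ satisfy p² = 9εz − 9ε h^{2/3}. Then −3ε h^{−1/3} ≤ (36π − p²)/(6h) − (9/2) h^{−1/3}. -/
open Real

/-!
Multiplying by `6h > 0` turns the inequality into `p² + 6(9/2 - 3ε) h^{2/3} ≤ 36π`. Substituting
for `p²` and dividing by `9` gives `ε z + 3(1 - ε) h^{2/3} ≤ 4π`. Since `3(1 - ε) ≥ 0`, the
left-hand side is largest at `h = z^{3/2}`, where `p = 0` and it equals `(3 - 2ε) z`; this is the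
origin of the threshold `4π / (3 - 2ε)`.
-/

theorem mul_rpow_le_div_sub_mul_rpow_iff {a b c k r x : ℝ} (hx : 0 < x) (hk : 0 < k) :
    a * x ^ r ≤ c / (k * x) - b * x ^ r ↔ k * (a + b) * x ^ (r + 1) ≤ c := by
  rw [le_sub_iff_add_le, ← add_mul, le_div_iff₀ (mul_pos hk hx), rpow_add_one hx.ne']
  ring_nf

theorem mul_add_mul_le_of_le_of_le_div {a b c x y : ℝ} (hb : 0 ≤ b) (hab : 0 < a + b)
    (hyx : y ≤ x) (hx : x ≤ c / (a + b)) : a * x + b * y ≤ c :=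
  calc
    a * x + b * y ≤ a * x + b * x := by gcongr
    _ = (a + b) * x := (add_mul a b x).symm
    _ ≤ c := (le_div_iff₀' hab).mp hx

/-- Pointwise inequality: if `ε ∈ (0,1)`, `z ∈ (0, 4π/(3−2ε)]`, `h ∈ (0, z^{3/2}]`, and
`p² = 9εz − 9ε h^{2/3}`, then `−3ε h^{−1/3} ≤ (36π − p²)/(6h) − (9/2) h^{−1/3}`. -/
theorem stmt_8 (ε z h p : ℝ) (hε : ε ∈ Set.Ioo (0:ℝ) 1)
    (hz : z ∈ Set.Ioc (0:ℝ) (4 * π / (3 - 2 * ε)))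
    (hh : h ∈ Set.Ioc (0:ℝ) (z ^ (3/2 : ℝ)))
    (hp : p ^ 2 = 9 * ε * z - 9 * ε * h ^ (2/3 : ℝ)) :
    -3 * ε * h ^ (-(1/3) : ℝ)
      ≤ (36 * π - p ^ 2) / (6 * h) - (9/2) * h ^ (-(1/3) : ℝ) := by
  obtain ⟨-, hε_lt⟩ := hε
  obtain ⟨hz_pos, hz_le⟩ := hz
  obtain ⟨hh_pos, hh_le⟩ := hh
  have h_rpow_le : h ^ (2/3 : ℝ) ≤ z := by
    rw [← inv_div, rpow_inv_le_iff_of_pos hh_pos.le hz_pos.le (by norm_num)]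
    exact hh_le
  have weighted_le : ε * z + 3 * (1 - ε) * h ^ (2/3 : ℝ) ≤ 4 * π := by
    have weight_sum : 3 - 2 * ε = ε + 3 * (1 - ε) := by ring
    rw [weight_sum] at hz_le
    exact mul_add_mul_le_of_le_of_le_div (by linarith) (by linarith) h_rpow_le hz_le
  have exponent_eq : (-(1/3) : ℝ) + 1 = 2/3 := by norm_num
  rw [mul_rpow_le_div_sub_mul_rpow_iff hh_pos (by norm_num), exponent_eq, hp]
  linarith
end

section
/- Let h : (0, π²) → (0, (4π)^{3/2}) be a differentiable function satisfying h'(s) = −(36π − 9 h(s)^{2/3})^{1/2} for all s ∈ (0, π²) and lim_{s→0⁺} h(s) = (4π)^{3/2}. Then there exist constants C > 0 and s₁ ∈ (0, π²) such that for all s ∈ (0, s₁), | h(π² − s) − 6√π · s · ( 1 − (3/10)(3s/(4π))^{2/3} − (3/280)(3s/(4π))^{4/3} ) | ≤ C s³. -/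
open Real Set Filter
open Asymptotics Topology

/-!
Put `h = A ^ (3 / 2) * u ^ 3`; for `A = 4 * π` this reads `u = sin r`, where `h` is the `3 / 2`-th
power of the area of a geodesic sphere of radius `r` in the unit `3`-sphere. Since
`G u = arcsin u - u * √(1 - u ^ 2)` has derivative `2 * u ^ 2 / √(1 - u ^ 2)`, the equation
separates: `G u` is affine in `s`, with slope `-2 / A` and value `G 1 = π / 2` at `s = 0`. So `u`
vanishes at `s = π * A / 4`, and at distance `s` from that point `G u = 2 / 3 * x` with
`x = 3 * s / A`. Integrating the binomial series of `(1 - u ^ 2) ^ (-1 / 2)` gives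
`x = u ^ 3 * (1 + 3 / 10 * u ^ 2 + 9 / 56 * u ^ 4 + O(u ^ 6))`.
A relation `x = u ^ 3 * (1 + α * u ^ 2 + β * u ^ 4 + O(u ^ 6))` inverts to
`u ^ 3 = x * (1 - α * x ^ (2 / 3) - (β - 5 / 3 * α ^ 2) * x ^ (4 / 3)) + O(x ^ 3)`,
and here `β - 5 / 3 * α ^ 2 = 9 / 56 - 3 / 20 = 3 / 280`.
-/

lemma choose_eq_prod_range_sub_div_factorial {K : Type*} [Field K] [CharZero K]
    (r : K) (n : ℕ) : Ring.choose r n = (∏ k ∈ Finset.range n, (r - k)) / n.factorial := by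
  rw [Ring.choose_eq_smul, ← Polynomial.aeval_eq_smeval, smul_eq_mul, inv_mul_eq_div,
    ← descPochhammer_eval_eq_prod_range, ← descPochhammer_map (algebraMap ℤ K),
    Polynomial.eval_map_algebraMap]

lemma isBigO_one_add_rpow_sub_sum_choose (r : ℝ) (n : ℕ) :
    (fun t : ℝ ↦ (1 + t) ^ r - ∑ k ∈ Finset.range n, Ring.choose r k * t ^ k)
      =O[𝓝 0] (· ^ n) := by
  refine IsBigO.of_norm_right ?_
  simpa [FormalMultilinearSeries.partialSum, binomialSeries, mul_comm] using
    (one_add_rpow_hasFPowerSeriesAt_zero (a := r)).isBigO_sub_partialSum_pow n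

lemma eqOn_add_smul_of_hasDerivAt_const {E : Type*} [NormedAddCommGroup E] [NormedSpace ℝ E]
    {f : ℝ → E} {a b : ℝ} {c l : E} (hf : ∀ s ∈ Ioo a b, HasDerivAt f c s)
    (hlim : Tendsto f (𝓝[Ioo a b] a) (𝓝 l)) :
    EqOn f (fun s ↦ l + (s - a) • c) (Ioo a b) := by
  have hline (s : ℝ) : HasDerivAt (fun s ↦ (s - a) • c) c s := by
    simpa using ((hasDerivAt_id s).sub_const a).smul_const c
  obtain ⟨d, hd⟩ := isOpen_Ioo.exists_eq_add_of_deriv_eq isPreconnected_Ioo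
    (fun s hs ↦ (hf s hs).differentiableAt.differentiableWithinAt)
    (fun s _ ↦ (hline s).differentiableAt.differentiableWithinAt)
    (fun s hs ↦ (hf s hs).deriv.trans (hline s).deriv.symm)
  intro s hs
  have hne : (𝓝[Ioo a b] a).NeBot := by
    rw [nhdsWithin_Ioo_eq_nhdsGT (hs.1.trans hs.2)]
    infer_instance
  have hlim' : Tendsto f (𝓝[Ioo a b] a) (𝓝 d) := by
    have hcont : Tendsto (fun s ↦ (s - a) • c + d) (𝓝[Ioo a b] a) (𝓝 ((a - a) • c + d)) :=
      (by fun_prop : Continuous fun s ↦ (s - a) • c + d).continuousWithinAt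
    rw [sub_self, zero_smul, zero_add] at hcont
    exact hcont.congr' (eventually_mem_nhdsWithin.mono fun s hs ↦ (hd hs).symm)
  rw [tendsto_nhds_unique hlim hlim', hd hs]
  exact add_comm _ _

lemma exists_forall_Ioo_norm_le_of_isBigO {E F : Type*} [Norm E] [SeminormedAddCommGroup F]
    {f : ℝ → E} {g : ℝ → F} {a b : ℝ} (hfg : f =O[𝓝[>] a] g) (hab : a < b) :
    ∃ C > 0, ∃ c ∈ Ioo a b, ∀ x ∈ Ioo a c, ‖f x‖ ≤ C * ‖g x‖ := by
  obtain ⟨C, hC, hbound⟩ := hfg.exists_pos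
  obtain ⟨m, ham, hmb⟩ := exists_between hab
  obtain ⟨c, hc, hsub⟩ := (mem_nhdsGT_iff_exists_mem_Ioc_Ioo_subset ham).1 hbound.bound
  exact ⟨C, hC, c, ⟨hc.1, hc.2.trans_lt hmb⟩, hsub⟩

/-- The area of the smaller segment cut off from the unit disc by a chord of half-length `u`.
It serves as the primitive of `2 * u ^ 2 / √(1 - u ^ 2)` vanishing at `0`; equivalently,
`2 * π * segmentArea (sin r)` is the volume of a geodesic ball of radius `r ≤ π / 2` in the unit
`3`-sphere. -/
noncomputable def segmentArea (u : ℝ) : ℝ := arcsin u - u * √(1 - u ^ 2)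

lemma continuous_segmentArea : Continuous segmentArea :=
  continuous_arcsin.sub (by fun_prop)

lemma segmentArea_zero : segmentArea 0 = 0 := by simp [segmentArea]

lemma segmentArea_one : segmentArea 1 = π / 2 := by simp [segmentArea]

lemma hasDerivAt_segmentArea {u : ℝ} (hu : u ∈ Ioo (-1) 1) :
    HasDerivAt segmentArea (2 * u ^ 2 / √(1 - u ^ 2)) u := by
  have hpos : 0 < 1 - u ^ 2 := by nlinarith [hu.1, hu.2]
  have hsqrt : HasDerivAt (fun u ↦ √(1 - u ^ 2)) (-(2 * u) / (2 * √(1 - u ^ 2))) u := by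
    simpa using ((hasDerivAt_pow 2 u).const_sub 1).sqrt hpos.ne'
  refine ((hasDerivAt_arcsin hu.1.ne' hu.2.ne).sub ((hasDerivAt_id u).mul hsqrt)).congr_deriv ?_
  field_simp
  simp only [id, sq_sqrt hpos.le]
  ring

lemma two_thirds_mul_pow_three_le_segmentArea {u : ℝ} (hu : u ∈ Icc 0 1) :
    2 / 3 * u ^ 3 ≤ segmentArea u := by
  have hmono : MonotoneOn (fun u ↦ segmentArea u - 2 / 3 * u ^ 3) (Icc 0 1) := by
    refine monotoneOn_of_hasDerivWithinAt_nonneg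
      (f' := fun u ↦ 2 * u ^ 2 / √(1 - u ^ 2) - 2 / 3 * (3 * u ^ 2)) (convex_Icc 0 1)
      (continuous_segmentArea.sub (by fun_prop)).continuousOn ?_ ?_ <;>
      rw [interior_Icc] <;> intro x hx
    · have hcube := (hasDerivAt_pow 3 x).const_mul (2 / 3)
      exact ((hasDerivAt_segmentArea ⟨by linarith [hx.1], hx.2⟩).sub hcube).hasDerivWithinAt
    · have hpos : 0 < √(1 - x ^ 2) := sqrt_pos.2 (by nlinarith [hx.1, hx.2])
      have hle : √(1 - x ^ 2) ≤ 1 := sqrt_le_one.2 (by nlinarith)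
      have := div_le_div_of_nonneg_left (by positivity : 0 ≤ 2 * x ^ 2) hpos hle
      linarith
  simpa [segmentArea_zero] using hmono (left_mem_Icc.2 zero_le_one) hu hu.1

lemma isBigO_inv_sqrt_one_sub_sq_sub :
    (fun u : ℝ ↦ (√(1 - u ^ 2))⁻¹ - (1 + 1 / 2 * u ^ 2 + 3 / 8 * u ^ 4 + 5 / 16 * u ^ 6))
      =O[𝓝 0] (· ^ 8) := by
  have hsq : Tendsto (fun u : ℝ ↦ -u ^ 2) (𝓝 0) (𝓝 0) := by
    simpa using (by fun_prop : Continuous fun u : ℝ ↦ -u ^ 2).tendsto 0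
  refine ((isBigO_one_add_rpow_sub_sum_choose (-1 / 2) 4).comp_tendsto hsq).congr' ?_ ?_
  · filter_upwards [Ioo_mem_nhds neg_one_lt_zero one_pos] with u hu
    have hpos : 0 < 1 - u ^ 2 := by nlinarith [hu.1, hu.2]
    have hrpow : (1 + -u ^ 2) ^ (-1 / 2 : ℝ) = (√(1 - u ^ 2))⁻¹ := by
      rw [← sub_eq_add_neg, neg_div, rpow_neg hpos.le, ← sqrt_eq_rpow]
    simp only [Function.comp_apply, hrpow, Finset.sum_range_succ, Finset.sum_range_zero,
      choose_eq_prod_range_sub_div_factorial, Finset.prod_range_succ, Finset.prod_range_zero]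
    norm_num [Nat.factorial]
    ring
  · exact .of_eq (by ext u; simp only [Function.comp_apply]; ring)

lemma isBigO_segmentArea_sub :
    (fun u ↦ segmentArea u - 2 / 3 * (u ^ 3 + 3 / 10 * u ^ 5 + 9 / 56 * u ^ 7))
      =O[𝓝 0] (· ^ 9) := by
  let P : ℝ → ℝ := fun u ↦ 2 / 3 * u ^ 3 + 1 / 5 * u ^ 5 + 3 / 28 * u ^ 7 + 5 / 72 * u ^ 9
  let P' : ℝ → ℝ := fun u ↦ 2 * u ^ 2 * (1 + 1 / 2 * u ^ 2 + 3 / 8 * u ^ 4 + 5 / 16 * u ^ 6)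
  have hP (u : ℝ) : HasDerivAt P (P' u) u := by
    refine ((((hasDerivAt_pow 3 u).const_mul (2 / 3)).add
      ((hasDerivAt_pow 5 u).const_mul (1 / 5))).add
      ((hasDerivAt_pow 7 u).const_mul (3 / 28)) |>.add
      ((hasDerivAt_pow 9 u).const_mul (5 / 72))).congr_deriv ?_
    norm_num [P']
    ring
  have hderiv : (fun u ↦ 2 * u ^ 2 / √(1 - u ^ 2) - P' u) =o[𝓝 0] (· ^ 8) := by
    have hten : (fun u ↦ 2 * u ^ 2 / √(1 - u ^ 2) - P' u) =O[𝓝 0] (· ^ 10) :=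
      (((isBigO_refl (fun u : ℝ ↦ u ^ 2) (𝓝 0)).const_mul_left 2).mul
        isBigO_inv_sqrt_one_sub_sq_sub).congr (fun u ↦ by simp only [P']; ring) (fun u ↦ by ring)
    exact hten.trans_isLittleO (isLittleO_pow_pow (by norm_num))
  have hmem : Ioo (-1 : ℝ) 1 ∈ 𝓝 0 := Ioo_mem_nhds neg_one_lt_zero one_pos
  have hsub : (fun u ↦ segmentArea u - P u) =o[𝓝 0] (· ^ 9) := by
    have := (convex_Ioo (-1 : ℝ) 1).isLittleO_pow_succ_real (x₀ := 0) (n := 8) (by simp)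
      (fun u hu ↦ ((hasDerivAt_segmentArea hu).sub (hP u)).hasDerivWithinAt)
      (by simpa only [nhdsWithin_eq_nhds.2 hmem, sub_zero] using hderiv)
    simpa [nhdsWithin_eq_nhds.2 hmem, segmentArea_zero, P] using this
  exact (hsub.isBigO.add ((isBigO_refl _ _).const_mul_left (5 / 72))).congr_left
    fun u ↦ by simp only [P]; ring

lemma isBigO_sub_mul_one_add_rpow {ι : Type*} {l : Filter ι} {a t : ι → ℝ} {α β : ℝ} (r q : ℝ)
    (ha : Tendsto a l (𝓝 0))
    (ht : (fun i ↦ t i - (α * a i + β * a i ^ 2)) =O[l] (fun i ↦ a i ^ 3)) :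
    (fun i ↦ t i - α * a i * (1 + t i) ^ r - (β - r * α ^ 2) * a i ^ 2 * (1 + t i) ^ q)
      =O[l] (fun i ↦ a i ^ 3) := by
  have hself (n : ℕ) (c : ℝ) : (fun i ↦ c * a i ^ n) =O[l] (fun i ↦ a i ^ n) :=
    (isBigO_refl _ _).const_mul_left c
  have hpow {m n : ℕ} (hmn : m < n) : (fun i ↦ a i ^ n) =O[l] (fun i ↦ a i ^ m) :=
    (isLittleO_pow_pow hmn).isBigO.comp_tendsto ha
  have ht₂ : (fun i ↦ t i - α * a i ^ 1) =O[l] (fun i ↦ a i ^ 2) :=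
    ((ht.trans (hpow (by norm_num))).add (hself 2 β)).congr_left fun i ↦ by ring
  have ht₁ : t =O[l] (fun i ↦ a i ^ 1) :=
    ((ht₂.trans (hpow one_lt_two)).add (hself 1 α)).congr_left fun i ↦ by ring
  have ht₀ : Tendsto t l (𝓝 0) := ht₁.trans_tendsto (by simpa only [pow_one] using ha)
  have hr : (fun i ↦ (1 + t i) ^ r - (1 + r * t i)) =O[l] (fun i ↦ a i ^ 2) :=
    (((isBigO_one_add_rpow_sub_sum_choose r 2).comp_tendsto ht₀).trans (ht₁.pow 2)).congr
      (by simp [Finset.sum_range_succ]) (by simp)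
  have hq : (fun i ↦ (1 + t i) ^ q - 1) =O[l] (fun i ↦ a i ^ 1) :=
    (((isBigO_one_add_rpow_sub_sum_choose q 1).comp_tendsto ht₀).trans (ht₁.pow 1)).congr
      (by simp) (by simp)
  have hαr : (fun i ↦ α * a i ^ 1 * ((1 + t i) ^ r - (1 + r * t i))) =O[l] (fun i ↦ a i ^ 3) :=
    ((hself 1 α).mul hr).congr_right fun i ↦ by ring
  have hαt : (fun i ↦ r * α * a i ^ 1 * (t i - α * a i ^ 1)) =O[l] (fun i ↦ a i ^ 3) :=
    ((hself 1 (r * α)).mul ht₂).congr_right fun i ↦ by ring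
  have hβq : (fun i ↦ (β - r * α ^ 2) * a i ^ 2 * ((1 + t i) ^ q - 1)) =O[l] (fun i ↦ a i ^ 3) :=
    ((hself 2 (β - r * α ^ 2)).mul hq).congr_right fun i ↦ by ring
  exact (((ht.sub hαr).sub hαt).sub hβq).congr_left fun i ↦ by ring

lemma isBigO_pow_three_sub_of_isBigO_sub {p : ℝ → ℝ} {α β : ℝ}
    (hp : (fun u ↦ p u - (u ^ 3 + α * u ^ 5 + β * u ^ 7)) =O[𝓝[>] 0] (· ^ 9)) :
    (fun u ↦ u ^ 3 - p u * (1 - α * p u ^ (2 / 3 : ℝ)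
      - (β - 5 / 3 * α ^ 2) * p u ^ (4 / 3 : ℝ))) =O[𝓝[>] 0] (· ^ 9) := by
  set t : ℝ → ℝ := fun u ↦ p u / u ^ 3 - 1 with ht_def
  have hp_eq : ∀ u ∈ Ioi 0, p u = u ^ 3 * (1 + t u) := fun u hu ↦ by
    have := (mem_Ioi.1 hu).ne'
    simp only [ht_def]
    field_simp
    ring
  have hsq : Tendsto (fun u : ℝ ↦ u ^ 2) (𝓝[>] 0) (𝓝 0) := by
    simpa using ((continuous_pow 2).tendsto (0 : ℝ)).mono_left nhdsWithin_le_nhds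
  have ht : (fun u ↦ t u - (α * u ^ 2 + β * (u ^ 2) ^ 2)) =O[𝓝[>] 0] (fun u ↦ (u ^ 2) ^ 3) := by
    refine (hp.mul (isBigO_refl (fun u : ℝ ↦ (u ^ 3)⁻¹) _)).congr' ?_ ?_ <;>
      filter_upwards [self_mem_nhdsWithin] with u hu <;> have := (mem_Ioi.1 hu).ne'
    · rw [hp_eq u hu]
      field_simp
      ring
    · field_simp
  have ht₀ : Tendsto t (𝓝[>] 0) (𝓝 0) := by
    have hpoly : Tendsto (fun u : ℝ ↦ α * u ^ 2 + β * (u ^ 2) ^ 2) (𝓝[>] 0) (𝓝 0) := by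
      simpa using (hsq.const_mul α).add ((hsq.pow 2).const_mul β)
    have hrem := ht.trans_tendsto (by simpa using hsq.pow 3)
    simpa using hrem.add hpoly
  refine ((isBigO_refl (fun u : ℝ ↦ u ^ 3) _).mul
    (isBigO_sub_mul_one_add_rpow (5 / 3) (7 / 3) hsq ht).neg_left).congr' ?_
    (.of_eq (by ext u; ring))
  filter_upwards [self_mem_nhdsWithin, ht₀.eventually (lt_mem_nhds neg_one_lt_zero)]
    with u hu htu
  have hnonneg : 0 ≤ 1 + t u := by linarith
  have hu₀ : 0 ≤ u := (mem_Ioi.1 hu).le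
  have hp_rpow (r : ℝ) : p u ^ r = u ^ (3 * r) * (1 + t u) ^ r := by
    rw [hp_eq u hu, mul_rpow (by positivity) hnonneg, ← rpow_natCast_mul hu₀, Nat.cast_ofNat]
  have hsucc {r : ℝ} (hr : 1 + r ≠ 0) : (1 + t u) ^ (1 + r) = (1 + t u) * (1 + t u) ^ r :=
    rpow_one_add' hnonneg hr
  rw [hp_rpow, hp_rpow, hp_eq u hu, show (5 / 3 : ℝ) = 1 + 2 / 3 by norm_num,
    show (7 / 3 : ℝ) = 1 + 4 / 3 by norm_num, hsucc (by norm_num), hsucc (by norm_num),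
    show (3 * (2 / 3) : ℝ) = (2 : ℕ) by norm_num, show (3 * (4 / 3) : ℝ) = (4 : ℕ) by norm_num,
    rpow_natCast, rpow_natCast]
  ring

lemma isBigO_pow_three_sub_of_segmentArea_eq {ι : Type*} {l : Filter ι} {u x : ι → ℝ}
    (hu : ∀ᶠ i in l, u i ∈ Ioo 0 1) (hux : ∀ᶠ i in l, segmentArea (u i) = 2 / 3 * x i)
    (hx : Tendsto x l (𝓝 0)) :
    (fun i ↦ u i ^ 3 - x i * (1 - 3 / 10 * x i ^ (2 / 3 : ℝ) - 3 / 280 * x i ^ (4 / 3 : ℝ)))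
      =O[l] (fun i ↦ x i ^ 3) := by
  have hcube : ∀ᶠ i in l, u i ^ 3 ≤ x i := by
    filter_upwards [hu, hux] with i hi hix
    linarith [two_thirds_mul_pow_three_le_segmentArea (Ioo_subset_Icc_self hi)]
  have hu₀ : Tendsto u l (𝓝[>] 0) := by
    refine tendsto_nhdsWithin_iff.2 ⟨?_, hu.mono fun i hi ↦ hi.1⟩
    have hroot : Tendsto (fun i ↦ x i ^ (1 / 3 : ℝ)) l (𝓝 0) := by
      simpa using hx.rpow_const (p := 1 / 3) (.inr (by norm_num))
    refine squeeze_zero' (hu.mono fun i hi ↦ hi.1.le) ?_ hroot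
    filter_upwards [hu, hcube] with i hi hle
    calc u i = (u i ^ 3) ^ (1 / 3 : ℝ) := by
          rw [← rpow_natCast_mul hi.1.le]; norm_num
      _ ≤ x i ^ (1 / 3 : ℝ) := rpow_le_rpow (by have := hi.1; positivity) hle (by norm_num)
  have harea : (fun u ↦ 3 / 2 * segmentArea u - (u ^ 3 + 3 / 10 * u ^ 5 + 9 / 56 * u ^ 7))
      =O[𝓝[>] 0] (· ^ 9) :=
    ((isBigO_segmentArea_sub.mono nhdsWithin_le_nhds).const_mul_left (3 / 2)).congr_left
      fun u ↦ by ring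
  refine (((isBigO_pow_three_sub_of_isBigO_sub harea).comp_tendsto hu₀).congr' ?_ .rfl).trans ?_
  · filter_upwards [hux] with i hi
    have hxi : 3 / 2 * segmentArea (u i) = x i := by rw [hi]; ring
    simp only [Function.comp_apply, hxi]
    norm_num
  · refine .of_bound' ?_
    filter_upwards [hu, hcube] with i hi hle
    have hpos : 0 < u i ^ 3 := pow_pos hi.1 3
    calc ‖u i ^ 9‖ = (u i ^ 3) ^ 3 := by rw [← pow_mul, norm_of_nonneg (pow_nonneg hi.1.le 9)]
      _ ≤ x i ^ 3 := by gcongr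
      _ ≤ ‖x i ^ 3‖ := le_norm_self _

lemma rpow_div_sqrt_mem_Ioo {A z : ℝ} (hz : z ∈ Ioo 0 (A ^ (3 / 2 : ℝ))) (hA : 0 < A) :
    z ^ (1 / 3 : ℝ) / √A ∈ Ioo 0 1 := by
  refine ⟨div_pos (rpow_pos_of_pos hz.1 _) (sqrt_pos.2 hA), (div_lt_one (sqrt_pos.2 hA)).2 ?_⟩
  calc z ^ (1 / 3 : ℝ) < (A ^ (3 / 2 : ℝ)) ^ (1 / 3 : ℝ) :=
        rpow_lt_rpow hz.1.le hz.2 (by norm_num)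
    _ = √A := by rw [← rpow_mul hA.le, sqrt_eq_rpow]; norm_num

lemma hasDerivAt_segmentArea_rpow_div_sqrt {A z : ℝ} (hA : 0 < A)
    (hz : z ∈ Ioo 0 (A ^ (3 / 2 : ℝ))) :
    HasDerivAt (fun z ↦ segmentArea (z ^ (1 / 3 : ℝ) / √A))
      (2 / (A * √(9 * A - 9 * z ^ (2 / 3 : ℝ)))) z := by
  have hmem := rpow_div_sqrt_mem_Ioo hz hA
  set u := z ^ (1 / 3 : ℝ) / √A with hu
  have hu₂ : z ^ (2 / 3 : ℝ) = A * u ^ 2 := by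
    rw [hu, div_pow, sq_sqrt hA.le, ← rpow_mul_natCast hz.1.le]
    field_simp
    norm_num
  have hroot : z ^ (1 / 3 - 1 : ℝ) = (A * u ^ 2)⁻¹ := by
    rw [← hu₂, ← rpow_neg hz.1.le]
    norm_num
  have hspeed : √(9 * A - 9 * z ^ (2 / 3 : ℝ)) = 3 * √A * √(1 - u ^ 2) := by
    rw [hu₂, show 9 * A - 9 * (A * u ^ 2) = 3 ^ 2 * A * (1 - u ^ 2) by ring,
      sqrt_mul (by positivity), sqrt_mul (by positivity), sqrt_sq (by norm_num)]
  have hpos : 0 < √(1 - u ^ 2) := sqrt_pos.2 (by nlinarith [hmem.1, hmem.2])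
  have hu_deriv := (hasDerivAt_rpow_const (p := 1 / 3) (.inl hz.1.ne')).div_const √A
  refine ((hasDerivAt_segmentArea ⟨by linarith [hmem.1], hmem.2⟩).comp z hu_deriv).congr_deriv ?_
  have := hmem.1.ne'
  rw [hroot, hspeed]
  field_simp

lemma segmentArea_eq_of_hasDerivAt {A L : ℝ} {h : ℝ → ℝ} (hA : 0 < A)
    (hmem : ∀ s ∈ Ioo 0 L, h s ∈ Ioo 0 (A ^ (3 / 2 : ℝ)))
    (hode : ∀ s ∈ Ioo 0 L, HasDerivAt h (-√(9 * A - 9 * h s ^ (2 / 3 : ℝ))) s)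
    (hlim : Tendsto h (𝓝[Ioo 0 L] 0) (𝓝 (A ^ (3 / 2 : ℝ)))) {s : ℝ} (hs : s ∈ Ioo 0 L) :
    segmentArea (h s ^ (1 / 3 : ℝ) / √A) = π / 2 - 2 * s / A := by
  have hderiv : ∀ s ∈ Ioo 0 L,
      HasDerivAt (fun s ↦ segmentArea (h s ^ (1 / 3 : ℝ) / √A)) (-(2 / A)) s := by
    intro s hs
    have hlt : h s ^ (2 / 3 : ℝ) < A := by
      calc h s ^ (2 / 3 : ℝ) < (A ^ (3 / 2 : ℝ)) ^ (2 / 3 : ℝ) :=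
            rpow_lt_rpow (hmem s hs).1.le (hmem s hs).2 (by norm_num)
        _ = A := by rw [← rpow_mul hA.le]; norm_num
    have hspeed : 0 < √(9 * A - 9 * h s ^ (2 / 3 : ℝ)) := sqrt_pos.2 (by linarith)
    refine ((hasDerivAt_segmentArea_rpow_div_sqrt hA (hmem s hs)).comp s
      (hode s hs)).congr_deriv ?_
    rw [mul_neg, div_mul_eq_mul_div, mul_div_mul_right _ _ hspeed.ne']
  have hone : (A ^ (3 / 2 : ℝ)) ^ (1 / 3 : ℝ) / √A = 1 := by
    rw [← rpow_mul hA.le, sqrt_eq_rpow, div_eq_one_iff_eq (rpow_pos_of_pos hA _).ne']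
    norm_num
  have hlim' : Tendsto (fun s ↦ segmentArea (h s ^ (1 / 3 : ℝ) / √A)) (𝓝[Ioo 0 L] 0)
      (𝓝 (π / 2)) := by
    have hroot := (hlim.rpow_const (p := 1 / 3) (.inr (by norm_num))).div_const √A
    rw [hone] at hroot
    simpa only [segmentArea_one, Function.comp_def] using
      (continuous_segmentArea.tendsto 1).comp hroot
  have hlinear := eqOn_add_smul_of_hasDerivAt_const hderiv hlim' hs
  simp only [sub_zero, smul_eq_mul] at hlinear
  rw [hlinear]
  ring

theorem stmt_12_general {A : ℝ} (hA : 0 < A) {h : ℝ → ℝ}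
    (hmem : ∀ s ∈ Ioo 0 (π * A / 4), h s ∈ Ioo 0 (A ^ (3 / 2 : ℝ)))
    (hode : ∀ s ∈ Ioo 0 (π * A / 4), HasDerivAt h (-√(9 * A - 9 * h s ^ (2 / 3 : ℝ))) s)
    (hlim : Tendsto h (𝓝[Ioo 0 (π * A / 4)] 0) (𝓝 (A ^ (3 / 2 : ℝ)))) :
    (fun s ↦ h (π * A / 4 - s) - 3 * √A * s *
      (1 - 3 / 10 * (3 * s / A) ^ (2 / 3 : ℝ) - 3 / 280 * (3 * s / A) ^ (4 / 3 : ℝ)))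
        =O[𝓝[>] 0] (· ^ 3) := by
  set L := π * A / 4 with hL_def
  have hreflect : ∀ᶠ s in 𝓝[>] 0, L - s ∈ Ioo 0 L := by
    filter_upwards [Ioo_mem_nhdsGT (by positivity : 0 < L)] with s hs
    exact ⟨sub_pos.2 hs.2, sub_lt_self L hs.1⟩
  have harea : ∀ᶠ s in 𝓝[>] 0,
      segmentArea (h (L - s) ^ (1 / 3 : ℝ) / √A) = 2 / 3 * (3 * s / A) := by
    filter_upwards [hreflect] with s hs
    rw [segmentArea_eq_of_hasDerivAt hA hmem hode hlim hs, hL_def]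
    field_simp
    ring
  have hx : Tendsto (fun s ↦ 3 * s / A) (𝓝[>] 0) (𝓝 0) := by
    simpa using ((by fun_prop : Continuous fun s ↦ 3 * s / A).tendsto 0).mono_left
      nhdsWithin_le_nhds
  have hexpand := isBigO_pow_three_sub_of_segmentArea_eq
    (hreflect.mono fun s hs ↦ rpow_div_sqrt_mem_Ioo (hmem _ hs) hA) harea hx
  have hscale : (fun s ↦ (3 * s / A) ^ 3) =O[𝓝[>] 0] (· ^ 3) :=
    ((isBigO_refl _ _).const_mul_left ((3 / A) ^ 3)).congr_left fun s ↦ by ring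
  refine ((hexpand.trans hscale).const_mul_left (√A ^ 3)).congr' ?_ .rfl
  filter_upwards [hreflect] with s hs
  have hcube : √A ^ 3 * (h (L - s) ^ (1 / 3 : ℝ) / √A) ^ 3 = h (L - s) := by
    rw [← mul_pow, mul_div_cancel₀ _ (sqrt_pos.2 hA).ne', ← rpow_mul_natCast (hmem _ hs).1.le]
    norm_num
  have hslope : √A ^ 3 * (3 * s / A) = 3 * √A * s := by
    rw [pow_succ, sq_sqrt hA.le]
    field_simp
  rw [mul_sub, hcube, ← mul_assoc, hslope]

/-- Asymptotic expansion near `s = π²` of the solution of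
`h' = −(36π − 9h^{2/3})^{1/2}` on `(0, π²)` with `h → (4π)^{3/2}` as `s → 0⁺`:
`h(π² − s) = 6√π s (1 − (3/10)(3s/(4π))^{2/3} − (3/280)(3s/(4π))^{4/3}) + O(s³)`. -/
theorem stmt_12 (h : ℝ → ℝ)
    (hmem : ∀ s ∈ Set.Ioo (0:ℝ) (π ^ 2), h s ∈ Set.Ioo (0:ℝ) ((4 * π) ^ (3/2 : ℝ)))
    (hode : ∀ s ∈ Set.Ioo (0:ℝ) (π ^ 2),
      HasDerivAt h (-Real.sqrt (36 * π - 9 * (h s) ^ (2/3 : ℝ))) s)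
    (hlim : Filter.Tendsto h (nhdsWithin 0 (Set.Ioo (0:ℝ) (π ^ 2)))
      (nhds ((4 * π) ^ (3/2 : ℝ)))) :
    ∃ C > (0:ℝ), ∃ s₁ ∈ Set.Ioo (0:ℝ) (π ^ 2), ∀ s ∈ Set.Ioo (0:ℝ) s₁,
      |h (π ^ 2 - s) - 6 * Real.sqrt π * s *
          (1 - (3/10) * (3 * s / (4 * π)) ^ (2/3 : ℝ)
             - (3/280) * (3 * s / (4 * π)) ^ (4/3 : ℝ))|
        ≤ C * s ^ 3 := by
  have hend : π ^ 2 = π * (4 * π) / 4 := by ring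
  have hcoeff : 6 * √π = 3 * √(4 * π) := by
    rw [sqrt_mul zero_le_four, show (4 : ℝ) = 2 ^ 2 by norm_num, sqrt_sq zero_le_two]
    ring
  rw [show 36 * π = 9 * (4 * π) by ring] at hode
  rw [hend] at hmem hode hlim ⊢
  rw [hcoeff]
  obtain ⟨C, hC, s₁, hs₁, hbound⟩ := exists_forall_Ioo_norm_le_of_isBigO
    (stmt_12_general (by positivity) hmem hode hlim) (by positivity : 0 < π * (4 * π) / 4)
  exact ⟨C, hC, s₁, hs₁, fun s hs ↦ by simpa [abs_of_pos hs.1] using hbound s hs⟩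
end
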